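/- Let $k \ge 1$ and let $H_1$ and $H_2$ be two $k$-uniform hypergraphs, each on $n$ vertices. For $l \ge 0$ let $\Delta_l(H)$ denote the maximum, over all $l$-element sets $U$ of vertices of $H$, of the number of edges of $H$ containing $U$ (with $\Delta_l(H)=0$ if $H$ has fewer than $l$ vertices), and let $\Delta(H)=\Delta_1(H)$. If $$\Delta(H_1)\,\Delta_{k-1}(H_2)+\Delta(H_2)\,\Delta_{k-1}(H_1) < n-k+2,$$ then $H_1$ and $H_2$ pack, that is, there is a bijection $f : V(H_1) \to V(H_2)$ such that $f(e) \notin E(H_2)$ for every edge $e \in E(H_1)$. -/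

import Mathlib

/-- A family of edges is `k`-uniform if every edge has exactly `k` vertices. -/
def Uniform (k : ℕ) {V : Type*} (E : Finset (Finset V)) : Prop :=
  ∀ e ∈ E, e.card = k

/-- Two hypergraphs (given by their edge sets) pack if there is a bijection of the
vertex sets mapping every edge of the first to a non-edge of the second. -/
def Packs {V₁ V₂ : Type*} [DecidableEq V₂]
    (E₁ : Finset (Finset V₁)) (E₂ : Finset (Finset V₂)) : Prop :=
  ∃ f : V₁ ≃ V₂, ∀ e ∈ E₁, e.image f ∉ E₂

/-- The degree of a vertex subset `U`: the number of edges containing `U`. -/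
def setDeg {V : Type*} [DecidableEq V] (E : Finset (Finset V)) (U : Finset V) : ℕ :=
  (E.filter fun e => U ⊆ e).card

/-- `maxDeg l E` is `Δ_l(H)`: the maximum degree of an `l`-element vertex subset
(it is `0` if there are fewer than `l` vertices). -/
def maxDeg {V : Type*} [Fintype V] [DecidableEq V] (l : ℕ) (E : Finset (Finset V)) : ℕ :=
  (Finset.univ.powersetCard l).sup (setDeg E)

/-!
Among all bijections `V₁ ≃ V₂` take one for which the fewest edges of `H₁` land on edges of `H₂`.
Carrying `H₁` over along it, we obtain two families `A` and `B` on the same vertex set, and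
suppose that they share an edge `e`. Fix `u ∈ e`. Composing with the transposition of `u` and
`v ∉ e` removes `e` from the common edges, and it creates a new common edge only if replacing `u`
by `v` turns some edge of `A` into an edge of `B`, or vice versa. The vertices `v` excluded in
these two ways number at most `Δ(A) Δ_{k-1}(B)` and `Δ(B) Δ_{k-1}(A)`; both sets contain `u`,
which also lies in `e`, so together with `e` they cover at most
`Δ(A) Δ_{k-1}(B) + Δ(B) Δ_{k-1}(A) + k - 2 < n` vertices. Any remaining `v` contradicts minimality.
-/

open Finset

section Swap

variable {V : Type*} [DecidableEq V] {s : Finset V} {u v : V}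

theorem map_swap_of_mem_of_notMem (hu : u ∈ s) (hv : v ∉ s) :
    s.map (Equiv.swap u v).toEmbedding = insert v (s.erase u) := by
  rw [← erase_insert_of_ne (ne_of_mem_of_not_mem hu hv).symm, ← coe_inj, coe_map, coe_erase,
    coe_insert]
  exact Equiv.image_swap_of_mem_of_notMem hu hv

theorem map_swap_of_mem_iff_mem (h : u ∈ s ↔ v ∈ s) :
    s.map (Equiv.swap u v).toEmbedding = s := by
  ext x
  rw [mem_map_equiv, Equiv.symm_swap, Equiv.swap_apply_def]
  split_ifs <;> simp_all

end Swap

section Relabel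

variable {V₁ V₂ V₃ : Type*}

/-- The family obtained from `E` by renaming the vertices along `f`. Renaming lets two families on
different vertex sets be compared on a common one. -/
def relabel (f : V₁ ≃ V₂) (E : Finset (Finset V₁)) : Finset (Finset V₂) :=
  E.map f.finsetCongr.toEmbedding

theorem mem_relabel {f : V₁ ≃ V₂} {E : Finset (Finset V₁)} {e : Finset V₂} :
    e ∈ relabel f E ↔ e.map f.symm.toEmbedding ∈ E :=
  mem_map_equiv

theorem relabel_trans (f : V₁ ≃ V₂) (g : V₂ ≃ V₃) (E : Finset (Finset V₁)) :
    relabel (f.trans g) E = relabel g (relabel f E) := by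
  simp only [relabel, map_map, ← Equiv.finsetCongr_trans, Equiv.trans_toEmbedding]

theorem uniform_relabel {k : ℕ} (f : V₁ ≃ V₂) {E : Finset (Finset V₁)} (hE : Uniform k E) :
    Uniform k (relabel f E) := by
  intro e he
  rw [← hE _ (mem_relabel.1 he), card_map]

theorem setDeg_relabel [DecidableEq V₁] [DecidableEq V₂] (f : V₁ ≃ V₂) (E : Finset (Finset V₁))
    (U : Finset V₁) : setDeg (relabel f E) (U.map f.toEmbedding) = setDeg E U := by
  simp only [setDeg, relabel, filter_map, card_map, Function.comp_def, Equiv.coe_toEmbedding,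
    Equiv.finsetCongr_apply, map_subset_map]

theorem maxDeg_relabel [Fintype V₁] [Fintype V₂] [DecidableEq V₁] [DecidableEq V₂] (l : ℕ)
    (f : V₁ ≃ V₂) (E : Finset (Finset V₁)) : maxDeg l (relabel f E) = maxDeg l E := by
  rw [maxDeg, ← map_univ_equiv f, powersetCard_map, sup_map]
  exact sup_congr rfl fun U _ => setDeg_relabel f E U

theorem packs_iff_exists_disjoint_relabel [DecidableEq V₂] {E₁ : Finset (Finset V₁)}
    {E₂ : Finset (Finset V₂)} : Packs E₁ E₂ ↔ ∃ f : V₁ ≃ V₂, Disjoint (relabel f E₁) E₂ := by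
  simp only [Packs, disjoint_left, relabel, forall_mem_map, Equiv.coe_toEmbedding,
    Equiv.finsetCongr_apply]
  simp only [map_eq_image, Equiv.coe_toEmbedding]

end Relabel

section Exchange

variable {V : Type*} [Fintype V] [DecidableEq V] {k : ℕ} {A B : Finset (Finset V)}
  {e : Finset V} {u v : V}

theorem setDeg_le_maxDeg (E : Finset (Finset V)) (U : Finset V) : setDeg E U ≤ maxDeg #U E :=
  le_sup (f := setDeg E) (mem_powersetCard.2 ⟨subset_univ U, rfl⟩)

/-- The vertices outside `U` that complete `U` to an edge of `E`. -/
def extensions (E : Finset (Finset V)) (U : Finset V) : Finset V :=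
  {v | v ∉ U ∧ insert v U ∈ E}

theorem mem_extensions {E : Finset (Finset V)} {U : Finset V} :
    v ∈ extensions E U ↔ v ∉ U ∧ insert v U ∈ E := by
  simp only [extensions, mem_filter_univ]

theorem card_extensions_le_maxDeg (E : Finset (Finset V)) (U : Finset V) :
    #(extensions E U) ≤ maxDeg #U E := by
  refine (card_le_card_of_injOn (insert · U) (fun v hv => ?_) ?_).trans (setDeg_le_maxDeg E U)
  · exact mem_filter.2 ⟨(mem_extensions.1 hv).2, subset_insert v U⟩
  · exact (insert_inj_on U).mono fun v hv => (mem_extensions.1 hv).1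

theorem card_extensions_le_maxDeg_of_uniform {E : Finset (Finset V)} (hE : Uniform k E)
    (U : Finset V) : #(extensions E U) ≤ maxDeg (k - 1) E := by
  obtain hempty | ⟨v, hv⟩ := (extensions E U).eq_empty_or_nonempty
  · simp only [hempty, card_empty, zero_le]
  · obtain ⟨hvU, hedge⟩ := mem_extensions.1 hv
    have hcard : #U = k - 1 := by
      rw [← hE _ hedge, card_insert_of_notMem hvU, Nat.add_sub_cancel]
    exact hcard ▸ card_extensions_le_maxDeg E U

/-- The vertices `v` that can replace `u` in some edge of `A` containing `u` so as to yield an edge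
of `B`; these are the obstructions to transposing `u` and `v`. Since `v = u` is allowed, `u` itself
is a blocker as soon as it lies on a common edge. -/
def blockers (A B : Finset (Finset V)) (u : V) : Finset V :=
  {e ∈ A | u ∈ e}.biUnion fun e => extensions B (e.erase u)

theorem mem_blockers :
    v ∈ blockers A B u ↔ ∃ e ∈ A, u ∈ e ∧ v ∉ e.erase u ∧ insert v (e.erase u) ∈ B := by
  simp only [blockers, mem_biUnion, mem_filter, mem_extensions, and_assoc]

theorem self_mem_blockers (hA : e ∈ A) (hB : e ∈ B) (hu : u ∈ e) : u ∈ blockers A B u :=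
  mem_blockers.2 ⟨e, hA, hu, notMem_erase u e, by rwa [insert_erase hu]⟩

theorem card_blockers_le {m : ℕ}
    (hm : ∀ e ∈ A, u ∈ e → #(extensions B (e.erase u)) ≤ m) :
    #(blockers A B u) ≤ maxDeg 1 A * m := by
  have hdeg : #{e ∈ A | u ∈ e} ≤ maxDeg 1 A := by
    simpa only [setDeg, singleton_subset_iff, card_singleton] using setDeg_le_maxDeg A {u}
  calc #(blockers A B u) ≤ #{e ∈ A | u ∈ e} * m :=
        card_biUnion_le_card_mul _ _ m fun e he => hm e (mem_filter.1 he).1 (mem_filter.1 he).2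
    _ ≤ maxDeg 1 A * m := Nat.mul_le_mul_right m hdeg

theorem card_blockers_le_of_uniform_left (hA : Uniform k A) (B : Finset (Finset V)) (u : V) :
    #(blockers A B u) ≤ maxDeg 1 A * maxDeg (k - 1) B := by
  refine card_blockers_le fun e he hu => ?_
  have hcard : #(e.erase u) = k - 1 := by rw [card_erase_of_mem hu, hA e he]
  exact hcard ▸ card_extensions_le_maxDeg B (e.erase u)

theorem card_blockers_le_of_uniform_right (A : Finset (Finset V)) (hB : Uniform k B) (u : V) :
    #(blockers A B u) ≤ maxDeg 1 A * maxDeg (k - 1) B :=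
  card_blockers_le fun e _ _ => card_extensions_le_maxDeg_of_uniform hB (e.erase u)

theorem exists_notMem_notMem_blockers (hA : Uniform k A) (heA : e ∈ A) (heB : e ∈ B) (hu : u ∈ e)
    (h : maxDeg 1 A * maxDeg (k - 1) B + maxDeg 1 B * maxDeg (k - 1) A + k < Fintype.card V + 2) :
    ∃ v ∉ e, v ∉ blockers A B u ∧ v ∉ blockers B A u := by
  set X := (blockers A B u).erase u
  set Y := (blockers B A u).erase u
  have hX : #X + 1 ≤ maxDeg 1 A * maxDeg (k - 1) B :=
    (card_erase_add_one (self_mem_blockers heA heB hu)).trans_le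
      (card_blockers_le_of_uniform_left hA B u)
  have hY : #Y + 1 ≤ maxDeg 1 B * maxDeg (k - 1) A :=
    (card_erase_add_one (self_mem_blockers heB heA hu)).trans_le
      (card_blockers_le_of_uniform_right B hA u)
  have hcover : #(e ∪ X ∪ Y) < #(univ : Finset V) := by
    have hle : #(e ∪ X ∪ Y) ≤ #e + #X + #Y :=
      (card_union_le _ _).trans (Nat.add_le_add_right (card_union_le e X) _)
    rw [hA e heA] at hle
    rw [card_univ]
    lia
  obtain ⟨v, -, hv⟩ := exists_mem_notMem_of_card_lt_card hcover
  simp only [mem_union, not_or] at hv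
  obtain ⟨⟨hve, hvX⟩, hvY⟩ := hv
  have hvu : v ≠ u := (ne_of_mem_of_not_mem hu hve).symm
  exact ⟨v, hve, fun hv => hvX (mem_erase.2 ⟨hvu, hv⟩), fun hv => hvY (mem_erase.2 ⟨hvu, hv⟩)⟩

theorem map_swap_notMem_of_notMem_blockers (hv : v ∉ blockers A B u) (heA : e ∈ A) (hue : u ∈ e)
    (hve : v ∉ e) : e.map (Equiv.swap u v).toEmbedding ∉ B := by
  rw [map_swap_of_mem_of_notMem hue hve]
  exact fun heB => hv (mem_blockers.2 ⟨e, heA, hue, fun h => hve (mem_of_mem_erase h), heB⟩)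

theorem relabel_swap_inter_ssubset (heA : e ∈ A) (heB : e ∈ B) (hue : u ∈ e) (hve : v ∉ e)
    (hAB : v ∉ blockers A B u) (hBA : v ∉ blockers B A u) :
    relabel (Equiv.swap u v) A ∩ B ⊂ A ∩ B := by
  have hmem {s : Finset V} :
      s ∈ relabel (Equiv.swap u v) A ↔ s.map (Equiv.swap u v).toEmbedding ∈ A := by
    rw [mem_relabel, Equiv.symm_swap]
  have hout {s : Finset V} (hs : s ∈ B) (hus : u ∈ s) (hvs : v ∉ s) :
      s ∉ relabel (Equiv.swap u v) A :=
    hmem.not.2 (map_swap_notMem_of_notMem_blockers hBA hs hus hvs)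
  have hin {s : Finset V} (hs : s ∈ B) (hus : u ∉ s) (hvs : v ∈ s) :
      s ∉ relabel (Equiv.swap u v) A := by
    intro hsA
    refine map_swap_notMem_of_notMem_blockers hAB (hmem.1 hsA) ?_ ?_ ?_
    · rwa [mem_map_equiv, Equiv.symm_swap, Equiv.swap_apply_left]
    · rwa [mem_map_equiv, Equiv.symm_swap, Equiv.swap_apply_right]
    · have hinvol := (Equiv.swap u v).finsetCongr.apply_symm_apply s
      rw [Equiv.finsetCongr_symm, Equiv.symm_swap] at hinvol
      rwa [← hinvol] at hs
  refine ssubset_iff_of_subset (fun s hs => ?_) |>.2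
    ⟨e, mem_inter.2 ⟨heA, heB⟩, fun he => hout heB hue hve (mem_inter.1 he).1⟩
  obtain ⟨hsA, hsB⟩ := mem_inter.1 hs
  have hiff : u ∈ s ↔ v ∈ s :=
    ⟨fun hus => by_contra fun hvs => hout hsB hus hvs hsA,
      fun hvs => by_contra fun hus => hin hsB hus hvs hsA⟩
  rw [hmem, map_swap_of_mem_iff_mem hiff] at hsA
  exact mem_inter.2 ⟨hsA, hsB⟩

end Exchange

theorem stmt_6_general {V₁ V₂ : Type*} [Fintype V₁] [DecidableEq V₁] [Fintype V₂] [DecidableEq V₂]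
    {k : ℕ} (hk : 1 ≤ k) (hV : Fintype.card V₁ = Fintype.card V₂)
    {E₁ : Finset (Finset V₁)} {E₂ : Finset (Finset V₂)} (h₁ : Uniform k E₁)
    (h : maxDeg 1 E₁ * maxDeg (k - 1) E₂ + maxDeg 1 E₂ * maxDeg (k - 1) E₁ + k <
      Fintype.card V₂ + 2) :
    Packs E₁ E₂ := by
  have : Nonempty (V₁ ≃ V₂) := Fintype.card_eq.1 hV
  obtain ⟨f, hmin⟩ := Finite.exists_min fun f : V₁ ≃ V₂ => #(relabel f E₁ ∩ E₂)
  refine packs_iff_exists_disjoint_relabel.2 ⟨f, disjoint_left.2 fun e he₁ he₂ => ?_⟩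
  have hunif := uniform_relabel f h₁
  obtain ⟨u, hue⟩ : e.Nonempty := card_pos.1 (by rwa [hunif e he₁])
  obtain ⟨v, hve, hv₁₂, hv₂₁⟩ := exists_notMem_notMem_blockers hunif he₁ he₂ hue
    (by rwa [maxDeg_relabel, maxDeg_relabel])
  have hlt := card_lt_card (relabel_swap_inter_ssubset he₁ he₂ hue hve hv₁₂ hv₂₁)
  rw [← relabel_trans] at hlt
  exact (hmin (f.trans (Equiv.swap u v))).not_gt hlt

/-- If `Δ(H₁)·Δ_{k−1}(H₂) + Δ(H₂)·Δ_{k−1}(H₁) < n − k + 2`, `k ≥ 1`, then the two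
`k`-uniform hypergraphs on `n` vertices pack. -/
theorem stmt_6 {V₁ V₂ : Type*} [Fintype V₁] [DecidableEq V₁] [Fintype V₂] [DecidableEq V₂]
    (k n : ℕ) (hk : 1 ≤ k) (hV₁ : Fintype.card V₁ = n) (hV₂ : Fintype.card V₂ = n)
    (E₁ : Finset (Finset V₁)) (E₂ : Finset (Finset V₂))
    (h₁ : Uniform k E₁) (h₂ : Uniform k E₂)
    (h : ((maxDeg 1 E₁ * maxDeg (k - 1) E₂ + maxDeg 1 E₂ * maxDeg (k - 1) E₁ : ℕ) : ℤ) <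
      (n : ℤ) - (k : ℤ) + 2) :
    Packs E₁ E₂ :=
  stmt_6_general hk (hV₁.trans hV₂.symm) h₁ (by lia)
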